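/- Let m ≥ 1, let p be a positive divisor of m, and write c := m/p. Suppose that q ≠ −a/b for all integers a, b with 1 ≤ a ≤ 2 ≤ b (equivalently, a + q·b ≠ 0 for all such a, b). Then the polynomials {x^α y^β : 0 ≤ α < m, 0 ≤ β < m, min(α,β) < c} ∪ {⟨β+m⟩_m · x^{α+m} y^β − ⟨α+m⟩_m · x^α y^{β+m} : 0 ≤ α < c, 0 ≤ β < c} form a K-basis of the space H_q(G(m,p,2)) := {f ∈ K[x,y] : D_{q,m} f = 0, D_{q,2m} f = 0, (∂_x∂_y)^c f = 0} of q-harmonic polynomials for G(m,p,2). In particular this space has dimension 2m²/p, the order of the group G(m,p,2). -/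

import Mathlib

open MvPolynomial

/-- The deformed operator `D_{q,k} = (1 + q x∂_x)∂_x^k + (1 + q y∂_y)∂_y^k` on `K[x,y]`,
with `x = X 0` and `y = X 1`. -/
noncomputable def D2 {K : Type*} [Field K] (q : K) (k : ℕ) :
    Module.End K (MvPolynomial (Fin 2) K) :=
  (1 + q • (LinearMap.mulLeft K (X 0) * (pderiv 0).toLinearMap)) *
      ((pderiv (0 : Fin 2)).toLinearMap : Module.End K (MvPolynomial (Fin 2) K)) ^ k
    + (1 + q • (LinearMap.mulLeft K (X 1) * (pderiv 1).toLinearMap)) *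
        ((pderiv (1 : Fin 2)).toLinearMap : Module.End K (MvPolynomial (Fin 2) K)) ^ k

/-- The deformed Pochhammer symbol `⟨d⟩_k = d(d-1)⋯(d-k+1)(1 + q(d-k))`. -/
noncomputable def tp {K : Type*} [Field K] (q : K) (d k : ℕ) : K :=
  (∏ i ∈ Finset.range k, ((d : K) - (i : K))) * (1 + q * ((d : K) - (k : K)))
/-- The claimed basis of the `q`-harmonic polynomials for `G(m,p,2)`, where `c = m/p`:
the monomials `x^α y^β` with `0 ≤ α, β < m` and `min(α,β) < c`, together with the
binomials `⟨β+m⟩_m x^{α+m} y^β − ⟨α+m⟩_m x^α y^{β+m}` with `0 ≤ α, β < c`. -/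
noncomputable def basisGmp2 {K : Type*} [Field K] (q : K) (m c : ℕ) :
    ({ab : Fin m × Fin m // min (ab.1 : ℕ) (ab.2 : ℕ) < c} ⊕ (Fin c × Fin c)) →
      MvPolynomial (Fin 2) K :=
  Sum.elim
    (fun ab => (X 0 : MvPolynomial (Fin 2) K) ^ (ab.1.1 : ℕ) * X 1 ^ (ab.1.2 : ℕ))
    (fun ab =>
      tp q ((ab.2 : ℕ) + m) m •
          ((X 0 : MvPolynomial (Fin 2) K) ^ ((ab.1 : ℕ) + m) * X 1 ^ (ab.2 : ℕ))
        - tp q ((ab.1 : ℕ) + m) m •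
            ((X 0 : MvPolynomial (Fin 2) K) ^ (ab.1 : ℕ) * X 1 ^ ((ab.2 : ℕ) + m)))

/-! Comparing coefficients turns `D_{q,m}`, `D_{q,2m}` and `(∂_x∂_y)^c` into relations between the
coefficients `F a b` of `x^a y^b`: the last operator kills exactly the polynomials with `F a b = 0`
whenever `c ≤ a, b`, while `D_{q,k}` ties `F (a + k) b` to `F a (b + k)`. So only the strips `a < c`
and `b < c` remain, and their part in the `m × m` square is free. In a strip at distance at least
`m + c` from the axis, `D_{q,m}` ties a coefficient to one that is already known to vanish, and so
does `D_{q,2m}` where the factor `1 + q n` of `D_{q,m}` is zero; at distance between `m` and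
`m + c`, `D_{q,m}` pairs the two strips, which leaves one free coefficient for each pair. Evaluating
the free coefficients on the claimed basis gives an invertible diagonal matrix. -/

section DualFamily

variable {K M ι : Type*} [Field K] [AddCommGroup M] [Module K M]
  {v : ι → M} {φ : ι → Module.Dual K M}

lemma linearIndependent_of_pairwise_dual_eq_zero
    (hoff : Pairwise fun i j ↦ φ i (v j) = 0) (hdiag : ∀ i, φ i (v i) ≠ 0) :
    LinearIndependent K v :=
  .of_pairwise_dual_eq_zero_one v (fun i ↦ (φ i (v i))⁻¹ • φ i)
    (fun i j hij ↦ by simp [hoff hij]) (fun i ↦ by simp [hdiag i])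

lemma span_range_eq_of_pairwise_dual_eq_zero [Finite ι] {W : Submodule K M}
    (hoff : Pairwise fun i j ↦ φ i (v j) = 0) (hdiag : ∀ i, φ i (v i) ≠ 0)
    (hmem : ∀ i, v i ∈ W) (hsep : ∀ x ∈ W, (∀ i, φ i x = 0) → x = 0) :
    Submodule.span K (Set.range v) = W := by
  have := Fintype.ofFinite ι
  have hle : Submodule.span K (Set.range v) ≤ W :=
    Submodule.span_le.mpr (Set.range_subset_iff.mpr hmem)
  refine hle.antisymm fun x hx ↦ ?_
  set y : M := ∑ i, (φ i x / φ i (v i)) • v i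
  have hy : y ∈ Submodule.span K (Set.range v) :=
    Submodule.sum_mem _ fun i _ ↦ Submodule.smul_mem _ _ (Submodule.subset_span ⟨i, rfl⟩)
  have hφ (i : ι) : φ i y = φ i x := by
    rw [map_sum, Finset.sum_eq_single_of_mem i (Finset.mem_univ i)
      (fun j _ hji ↦ by rw [map_smul, hoff hji.symm, smul_zero]),
      map_smul, smul_eq_mul, div_mul_cancel₀ _ (hdiag i)]
  have hxy : x - y = 0 :=
    hsep _ (W.sub_mem hx (hle hy)) fun i ↦ by rw [map_sub, hφ, sub_self]
  rwa [sub_eq_zero.mp hxy]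

end DualFamily

section Derivatives

variable {σ R : Type*} [CommSemiring R]

lemma coeff_X_mul_pderiv (i : σ) (n : σ →₀ ℕ) (f : MvPolynomial σ R) :
    coeff n (X i * pderiv i f) = n i * coeff n f := by
  classical
  induction f using MvPolynomial.induction_on' with
  | add f g hf hg => simp only [map_add, mul_add, coeff_add, hf, hg]
  | monomial d r =>
    rw [X_mul_pderiv_monomial, coeff_smul, coeff_monomial, nsmul_eq_mul]
    split_ifs with h
    · rw [h]
    · simp

lemma coeff_one_add_smul_X_mul_pderiv (q : R) (i : σ) (n : σ →₀ ℕ) (f : MvPolynomial σ R) :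
    coeff n ((1 + q • (LinearMap.mulLeft R (X i) * (pderiv i).toLinearMap) :
      Module.End R (MvPolynomial σ R)) f) = (1 + q * n i) * coeff n f := by
  have h := coeff_X_mul_pderiv i n f
  simp only [LinearMap.add_apply, Module.End.one_apply, LinearMap.smul_apply, Module.End.mul_apply,
    LinearMap.mulLeft_apply, Derivation.coeFn_coe, coeff_add, coeff_smul, smul_eq_mul, h]
  ring

lemma coeff_pderiv_pow (i : σ) (k : ℕ) (n : σ →₀ ℕ) (f : MvPolynomial σ R) :
    coeff n (((pderiv i).toLinearMap ^ k : Module.End R (MvPolynomial σ R)) f)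
      = (n i + k).descFactorial k * coeff (n + Finsupp.single i k) f := by
  induction k generalizing f with
  | zero => simp
  | succ k ih =>
    rw [pow_succ, Module.End.mul_apply, ih, Derivation.coeFn_coe, coeff_pderiv, add_assoc,
      ← Finsupp.single_add, ← add_assoc (n i), Nat.succ_descFactorial_succ]
    simp only [Finsupp.add_apply, Finsupp.single_eq_same]
    push_cast
    ring

lemma commute_pderiv (i j : σ) :
    Commute (pderiv i).toLinearMap
      ((pderiv j).toLinearMap : Module.End R (MvPolynomial σ R)) := by
  obtain rfl | hij := eq_or_ne i j
  · exact Commute.refl _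
  refine LinearMap.ext fun f ↦ MvPolynomial.ext _ _ fun n ↦ ?_
  simp only [Module.End.mul_apply, Derivation.coeFn_coe, coeff_pderiv, Finsupp.add_apply,
    Finsupp.single_eq_of_ne hij, Finsupp.single_eq_of_ne hij.symm, add_zero]
  rw [add_right_comm, mul_right_comm]

end Derivatives

section BivariateCoefficients

variable {R : Type*} [CommSemiring R]

/-- The coefficient of `x^a y^b`, as a linear functional on `R[x,y]`. -/
noncomputable def coeffXY (a b : ℕ) : Module.Dual R (MvPolynomial (Fin 2) R) :=
  lcoeff R (Finsupp.single 0 a + Finsupp.single 1 b)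

lemma ext_coeffXY {f g : MvPolynomial (Fin 2) R} (h : ∀ a b, coeffXY a b f = coeffXY a b g) :
    f = g := by
  ext n
  have hn : Finsupp.single 0 (n 0) + Finsupp.single 1 (n 1) = n := by
    ext i; fin_cases i <;> simp
  simpa only [coeffXY, lcoeff_apply, hn] using h (n 0) (n 1)

lemma coeffXY_X_pow_mul_X_pow (a b α β : ℕ) :
    coeffXY a b (X 0 ^ α * X 1 ^ β : MvPolynomial (Fin 2) R)
      = if a = α ∧ b = β then 1 else 0 := by
  rw [coeffXY, lcoeff_apply, X_pow_eq_monomial, X_pow_eq_monomial, monomial_mul, one_mul,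
    coeff_monomial]
  refine if_congr ⟨fun h ↦ ?_, ?_⟩ rfl rfl
  · have h₀ := DFunLike.congr_fun h 0
    have h₁ := DFunLike.congr_fun h 1
    simp only [Finsupp.add_apply, Finsupp.single_apply] at h₀ h₁
    simp_all
  · rintro ⟨rfl, rfl⟩
    rfl

lemma coeffXY_pderiv_mul_pderiv_pow (a b c : ℕ) (f : MvPolynomial (Fin 2) R) :
    coeffXY a b ((((pderiv 0).toLinearMap * (pderiv 1).toLinearMap :
        Module.End R (MvPolynomial (Fin 2) R)) ^ c) f)
      = (a + c).descFactorial c * (b + c).descFactorial c * coeffXY (a + c) (b + c) f := by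
  have hexp : (Finsupp.single 0 a + Finsupp.single 1 b + Finsupp.single 0 c + Finsupp.single 1 c :
      Fin 2 →₀ ℕ) = Finsupp.single 0 (a + c) + Finsupp.single 1 (b + c) := by
    rw [Finsupp.single_add, Finsupp.single_add]; abel
  rw [(commute_pderiv 0 1).mul_pow, Module.End.mul_apply, coeffXY, lcoeff_apply, coeff_pderiv_pow,
    coeff_pderiv_pow, hexp, coeffXY, lcoeff_apply, mul_assoc]
  simp

end BivariateCoefficients

section DeformedOperators

variable {K : Type*} [Field K] (q : K)

lemma tp_add_self (n k : ℕ) : tp q (n + k) k = (n + k).descFactorial k * (1 + q * n) := by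
  rw [tp, Finset.prod_range_natCast_sub, ← Nat.descFactorial_eq_prod_range]
  push_cast
  ring

variable {q} in
lemma tp_add_self_ne_zero [CharZero K] {n : ℕ} (h : 1 + q * n ≠ 0) (k : ℕ) :
    tp q (n + k) k ≠ 0 := by
  rw [tp_add_self]
  exact mul_ne_zero (Nat.cast_ne_zero.mpr (Nat.descFactorial_pos.mpr (k.le_add_left n)).ne') h

lemma coeff_one_add_smul_X_mul_pderiv_mul_pow {σ : Type*} (i : σ) (k : ℕ) (n : σ →₀ ℕ)
    (f : MvPolynomial σ K) :
    coeff n (((1 + q • (LinearMap.mulLeft K (X i) * (pderiv i).toLinearMap)) *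
      (pderiv i).toLinearMap ^ k : Module.End K (MvPolynomial σ K)) f)
      = tp q (n i + k) k * coeff (n + Finsupp.single i k) f := by
  rw [Module.End.mul_apply, coeff_one_add_smul_X_mul_pderiv, coeff_pderiv_pow, tp_add_self]
  ring

lemma coeffXY_D2 (k a b : ℕ) (f : MvPolynomial (Fin 2) K) :
    coeffXY a b (D2 q k f)
      = tp q (a + k) k * coeffXY (a + k) b f + tp q (b + k) k * coeffXY a (b + k) f := by
  rw [D2, LinearMap.add_apply, map_add]
  simp only [coeffXY, lcoeff_apply, coeff_one_add_smul_X_mul_pderiv_mul_pow, Finsupp.single_add,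
    ← add_assoc]
  simp [add_right_comm]

end DeformedOperators

section QHarmonic

variable {K : Type*} [Field K] {q : K} {m c : ℕ}

/-- The `q`-harmonic polynomials: those killed by `D_{q,m}`, `D_{q,2m}` and `(∂_x∂_y)^c`. For
`G(m,p,2)` one takes `c = m/p`. -/
noncomputable def qHarmonic (q : K) (m c : ℕ) : Submodule K (MvPolynomial (Fin 2) K) :=
  LinearMap.ker (D2 q m) ⊓ LinearMap.ker (D2 q (2 * m)) ⊓
    LinearMap.ker (((pderiv 0).toLinearMap * (pderiv 1).toLinearMap :
      Module.End K (MvPolynomial (Fin 2) K)) ^ c)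

/-- The relations on an array `F` which say that the formal power series with coefficient `F a b` at
`x^a y^b` is killed by `D_{q,m}`, `D_{q,2m}` and `(∂_x∂_y)^c`. Unlike a polynomial, an array can be
transposed by exchanging its arguments, so one proof serves both strips `a < c` and `b < c`. -/
structure IsQHarmonicArray (q : K) (m c : ℕ) (F : ℕ → ℕ → K) : Prop where
  rel (a b : ℕ) : tp q (a + m) m * F (a + m) b + tp q (b + m) m * F a (b + m) = 0
  rel_two (a b : ℕ) : tp q (a + 2 * m) (2 * m) * F (a + 2 * m) b
    + tp q (b + 2 * m) (2 * m) * F a (b + 2 * m) = 0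
  eq_zero_of_le {a b : ℕ} (ha : c ≤ a) (hb : c ≤ b) : F a b = 0

lemma mem_ker_D2_iff {k : ℕ} {f : MvPolynomial (Fin 2) K} :
    f ∈ LinearMap.ker (D2 q k) ↔ ∀ a b : ℕ,
      tp q (a + k) k * coeffXY (a + k) b f + tp q (b + k) k * coeffXY a (b + k) f = 0 := by
  simp only [LinearMap.mem_ker, ← coeffXY_D2]
  exact ⟨fun h a b ↦ by rw [h, map_zero], fun h ↦ ext_coeffXY fun a b ↦ by rw [h, map_zero]⟩

lemma mem_ker_pderiv_mul_pderiv_pow_iff [CharZero K] {f : MvPolynomial (Fin 2) K} :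
    f ∈ LinearMap.ker (((pderiv 0).toLinearMap * (pderiv 1).toLinearMap :
      Module.End K (MvPolynomial (Fin 2) K)) ^ c) ↔
      ∀ a b : ℕ, c ≤ a → c ≤ b → coeffXY a b f = 0 := by
  rw [LinearMap.mem_ker]
  constructor
  · intro hf a b ha hb
    obtain ⟨a, rfl⟩ := Nat.exists_eq_add_of_le' ha
    obtain ⟨b, rfl⟩ := Nat.exists_eq_add_of_le' hb
    have h := coeffXY_pderiv_mul_pderiv_pow a b c f
    rw [hf, map_zero] at h
    simpa [Nat.descFactorial_eq_zero_iff_lt] using h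
  · intro hf
    refine ext_coeffXY fun a b ↦ ?_
    rw [coeffXY_pderiv_mul_pderiv_pow, hf _ _ (c.le_add_left a) (c.le_add_left b), mul_zero,
      map_zero]

lemma mem_qHarmonic_iff [CharZero K] {f : MvPolynomial (Fin 2) K} :
    f ∈ qHarmonic q m c ↔ IsQHarmonicArray q m c fun a b ↦ coeffXY a b f := by
  rw [qHarmonic, Submodule.mem_inf, Submodule.mem_inf, mem_ker_D2_iff, mem_ker_D2_iff,
    mem_ker_pderiv_mul_pderiv_pow_iff]
  exact ⟨fun ⟨⟨h₁, h₂⟩, h₃⟩ ↦ ⟨h₁, h₂, h₃ _ _⟩, fun ⟨h₁, h₂, h₃⟩ ↦ ⟨⟨h₁, h₂⟩, fun _ _ ↦ h₃⟩⟩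

namespace IsQHarmonicArray

variable {F : ℕ → ℕ → K}

lemma swap (hF : IsQHarmonicArray q m c F) : IsQHarmonicArray q m c fun a b ↦ F b a where
  rel a b := by rw [add_comm]; exact hF.rel b a
  rel_two a b := by rw [add_comm]; exact hF.rel_two b a
  eq_zero_of_le ha hb := hF.eq_zero_of_le hb ha

variable [CharZero K]

lemma eq_zero_of_shift_eq_zero (hF : IsQHarmonicArray q m c F) {a n : ℕ} (hn : 1 + q * n ≠ 0)
    (h : F (a + m) n = 0) : F a (n + m) = 0 := by
  simpa [h, tp_add_self_ne_zero hn] using hF.rel a n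

lemma eq_zero_of_two_shift_eq_zero (hF : IsQHarmonicArray q m c F) {a n : ℕ} (hn : 1 + q * n ≠ 0)
    (h : F (a + 2 * m) n = 0) : F a (n + 2 * m) = 0 := by
  simpa [h, tp_add_self_ne_zero hn] using hF.rel_two a n

lemma eq_zero_of_add_le_right (hF : IsQHarmonicArray q m c F) (hcm : c ≤ m)
    (hq : ∀ n : ℕ, n < m + c → 1 + q * n ≠ 0) (a : ℕ) {n : ℕ} (hn : c ≤ n) :
    F a (n + m) = 0 := by
  obtain ha | ha := le_or_gt c a
  · exact hF.eq_zero_of_le ha (by lia)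
  by_cases hqn : 1 + q * n = 0
  · have hmn : m + c ≤ n := not_lt.mp fun h ↦ hq n h hqn
    obtain ⟨b, rfl⟩ := Nat.exists_eq_add_of_le' (le_of_add_le_left hmn)
    -- `1 + q b` and `1 + q (b + m)` cannot both vanish, so `D_{q,2m}` replaces `D_{q,m}` here.
    have hqb : 1 + q * b ≠ 0 := by
      intro hqb
      have hqm : q * m = 0 := by push_cast at hqn; linear_combination hqn - hqb
      obtain rfl | hm := mul_eq_zero.mp hqm
      · simp at hqb
      · have : m = 0 := by exact_mod_cast hm
        lia
    rw [add_assoc, ← two_mul]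
    exact hF.eq_zero_of_two_shift_eq_zero hqb (hF.eq_zero_of_le (by lia) (by lia))
  · exact hF.eq_zero_of_shift_eq_zero hqn (hF.eq_zero_of_le (by lia) hn)

theorem eq_zero (hF : IsQHarmonicArray q m c F) (hcm : c ≤ m)
    (hq : ∀ n : ℕ, n < m + c → 1 + q * n ≠ 0)
    (hsquare : ∀ a b, a < m → b < m → min a b < c → F a b = 0)
    (hstrip : ∀ a b, a < c → b < c → F (a + m) b = 0) (a b : ℕ) : F a b = 0 := by
  by_cases hab : c ≤ a ∧ c ≤ b
  · exact hF.eq_zero_of_le hab.1 hab.2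
  obtain ha | ha := lt_or_ge a m
  · obtain hb | hb := lt_or_ge b m
    · exact hsquare a b ha hb (by lia)
    obtain ⟨n, rfl⟩ := Nat.exists_eq_add_of_le' hb
    obtain hn | hn := lt_or_ge n c
    · exact hF.eq_zero_of_shift_eq_zero (hq n (by lia)) (hstrip a n (by lia) hn)
    · exact hF.eq_zero_of_add_le_right hcm hq a hn
  · obtain ⟨n, rfl⟩ := Nat.exists_eq_add_of_le' ha
    obtain hn | hn := lt_or_ge n c
    · exact hstrip n b hn (by lia)
    · exact hF.swap.eq_zero_of_add_le_right hcm hq b hn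

end IsQHarmonicArray

end QHarmonic

section Basis

variable {K : Type*} [Field K] {q : K} {m c : ℕ}

lemma X_pow_mul_X_pow_mem_qHarmonic [CharZero K] {α β : ℕ} (hα : α < m) (hβ : β < m)
    (hc : min α β < c) : X 0 ^ α * X 1 ^ β ∈ qHarmonic q m c := by
  rw [mem_qHarmonic_iff]
  constructor <;> intros <;> simp only [coeffXY_X_pow_mul_X_pow] <;> grind

lemma tp_smul_sub_tp_smul_mem_qHarmonic [CharZero K] (hcm : c ≤ m) {α β : ℕ} (hα : α < c)
    (hβ : β < c) :
    tp q (β + m) m • (X 0 ^ (α + m) * X 1 ^ β) - tp q (α + m) m • (X 0 ^ α * X 1 ^ (β + m))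
      ∈ qHarmonic q m c := by
  rw [mem_qHarmonic_iff]
  constructor <;> intro a b <;>
    simp only [map_sub, map_smul, smul_eq_mul, coeffXY_X_pow_mul_X_pow]
  case rel =>
    by_cases hab : a = α ∧ b = β
    · have hm : m ≠ 0 := by lia
      simp [hab, hm, mul_comm]
    · grind
  all_goals grind

lemma basisGmp2_mem_qHarmonic [CharZero K] (hcm : c ≤ m)
    (i : {ab : Fin m × Fin m // min (ab.1 : ℕ) (ab.2 : ℕ) < c} ⊕ (Fin c × Fin c)) :
    basisGmp2 q m c i ∈ qHarmonic q m c := by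
  obtain ⟨⟨α, β⟩, hc⟩ | ⟨α, β⟩ := i
  · exact X_pow_mul_X_pow_mem_qHarmonic α.2 β.2 hc
  · exact tp_smul_sub_tp_smul_mem_qHarmonic hcm α.2 β.2

/-- The family of functionals, indexed like `basisGmp2`, that is dual to `basisGmp2` up to scaling:
the coefficient of the monomial, respectively of the first monomial of the binomial. -/
noncomputable def dualGmp2 (K : Type*) [Field K] (m c : ℕ) :
    ({ab : Fin m × Fin m // min (ab.1 : ℕ) (ab.2 : ℕ) < c} ⊕ (Fin c × Fin c)) →
      Module.Dual K (MvPolynomial (Fin 2) K) :=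
  Sum.elim (fun ab ↦ coeffXY ab.1.1 ab.1.2) (fun ab ↦ coeffXY (ab.1 + m) ab.2)

lemma pairwise_dualGmp2_basisGmp2_eq_zero (q : K) (hcm : c ≤ m) :
    Pairwise fun i j ↦ dualGmp2 K m c i (basisGmp2 q m c j) = 0 := by
  rintro (⟨⟨a, b⟩, hab⟩ | ⟨a, b⟩) (⟨⟨α, β⟩, hαβ⟩ | ⟨α, β⟩) hne <;>
    simp only [dualGmp2, basisGmp2, Sum.elim_inl, Sum.elim_inr, map_sub, map_smul, smul_eq_mul,
      coeffXY_X_pow_mul_X_pow] <;>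
    grind

lemma dualGmp2_basisGmp2_self_ne_zero [CharZero K] (hcm : c ≤ m)
    (hq : ∀ n : ℕ, n < c → 1 + q * n ≠ 0)
    (i : {ab : Fin m × Fin m // min (ab.1 : ℕ) (ab.2 : ℕ) < c} ⊕ (Fin c × Fin c)) :
    dualGmp2 K m c i (basisGmp2 q m c i) ≠ 0 := by
  obtain ⟨⟨α, β⟩, hc⟩ | ⟨α, β⟩ := i
  · simp [dualGmp2, basisGmp2, coeffXY_X_pow_mul_X_pow]
  · have hm : m ≠ 0 := by have := β.2; lia
    simpa [dualGmp2, basisGmp2, coeffXY_X_pow_mul_X_pow, hm]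
      using tp_add_self_ne_zero (hq β β.2) m

lemma eq_zero_of_dualGmp2_eq_zero [CharZero K] (hcm : c ≤ m)
    (hq : ∀ n : ℕ, n < m + c → 1 + q * n ≠ 0) {f : MvPolynomial (Fin 2) K}
    (hf : f ∈ qHarmonic q m c) (h : ∀ i, dualGmp2 K m c i f = 0) : f = 0 :=
  ext_coeffXY fun a b ↦ by
    rw [map_zero]
    exact (mem_qHarmonic_iff.mp hf).eq_zero hcm hq
      (fun a b ha hb hc ↦ h (.inl ⟨(⟨a, ha⟩, ⟨b, hb⟩), hc⟩))
      (fun a b ha hb ↦ h (.inr (⟨a, ha⟩, ⟨b, hb⟩))) a b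

end Basis

lemma card_fin_prod_min_lt_add_sq (m c : ℕ) :
    Fintype.card {ab : Fin m × Fin m // min (ab.1 : ℕ) (ab.2 : ℕ) < c} + (m - c) ^ 2 = m ^ 2 := by
  have hge : Fintype.card {a : Fin m // ¬ (a : ℕ) < c} = m - c := by
    rw [Fintype.card_subtype_compl, Fintype.card_fin, Fintype.card_subtype, Fin.card_filter_val_lt]
    lia
  have hcompl : Fintype.card {ab : Fin m × Fin m // ¬ min (ab.1 : ℕ) (ab.2 : ℕ) < c}
      = (m - c) ^ 2 := by
    rw [← hge, pow_two, ← Fintype.card_prod]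
    exact Fintype.card_congr ((Equiv.subtypeEquivRight fun _ ↦ by simp).trans
      Equiv.subtypeProdEquivProd)
  rw [← hcompl, ← Fintype.card_sum, Fintype.card_congr (Equiv.sumCompl _), Fintype.card_prod,
    Fintype.card_fin, pow_two]

lemma card_basisGmp2_index {m c : ℕ} (hcm : c ≤ m) :
    Fintype.card ({ab : Fin m × Fin m // min (ab.1 : ℕ) (ab.2 : ℕ) < c} ⊕ (Fin c × Fin c))
      = 2 * m * c := by
  have h := card_fin_prod_min_lt_add_sq m c
  obtain ⟨d, rfl⟩ := Nat.exists_eq_add_of_le hcm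
  rw [Nat.add_sub_cancel_left] at h
  rw [Fintype.card_sum, Fintype.card_prod, Fintype.card_fin]
  linarith

theorem basis_qHarmonic_Gmp2_general {K : Type*} [Field K] [CharZero K] (q : K) {m c : ℕ}
    (hcm : c ≤ m) (hq : ∀ n : ℕ, n < m + c → 1 + q * n ≠ 0) :
    LinearIndependent K (basisGmp2 q m c)
    ∧ Submodule.span K (Set.range (basisGmp2 q m c)) = qHarmonic q m c
    ∧ Module.finrank K (qHarmonic q m c) = 2 * m * c := by
  have hoff := pairwise_dualGmp2_basisGmp2_eq_zero q hcm
  have hdiag := dualGmp2_basisGmp2_self_ne_zero hcm fun n hn ↦ hq n (by lia)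
  have hli : LinearIndependent K (basisGmp2 q m c) :=
    linearIndependent_of_pairwise_dual_eq_zero hoff hdiag
  have hspan : Submodule.span K (Set.range (basisGmp2 q m c)) = qHarmonic q m c :=
    span_range_eq_of_pairwise_dual_eq_zero hoff hdiag (basisGmp2_mem_qHarmonic hcm)
      fun _ ↦ eq_zero_of_dualGmp2_eq_zero hcm hq
  exact ⟨hli, hspan, by rw [← hspan, finrank_span_eq_card hli, card_basisGmp2_index hcm]⟩

lemma one_add_mul_natCast_ne_zero {K : Type*} [Field K] {q : K}
    (hq : ∀ a b : ℕ, 1 ≤ a → a ≤ 2 → 2 ≤ b → (a : K) + q * (b : K) ≠ 0) (n : ℕ) :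
    1 + q * (n : K) ≠ 0 := by
  match n with
  | 0 => simp
  | 1 =>
    intro h
    refine hq 2 2 one_le_two le_rfl le_rfl ?_
    push_cast at h ⊢
    linear_combination 2 * h
  | n + 2 => simpa using hq 1 (n + 2) le_rfl one_le_two (Nat.le_add_left 2 n)

/-- For `p` a positive divisor of `m`, `c = m/p`, and `q ≠ -a/b` with `1 ≤ a ≤ 2 ≤ b`,
the polynomials of `basisGmp2` form a basis of the `q`-harmonic polynomials for
`G(m,p,2)` (cut out by `D_{q,m}`, `D_{q,2m}` and `(∂_x∂_y)^c`); in particular that space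
has dimension `2m²/p`, the order of `G(m,p,2)`. -/
theorem basis_qHarmonic_Gmp2 {K : Type*} [Field K] [CharZero K] (q : K)
    (m p : ℕ) (hm : 1 ≤ m) (hp : 1 ≤ p) (hpm : p ∣ m)
    (hq : ∀ a b : ℕ, 1 ≤ a → a ≤ 2 → 2 ≤ b → (a : K) + q * (b : K) ≠ 0) :
    LinearIndependent K (basisGmp2 (K := K) q m (m / p))
    ∧ Submodule.span K (Set.range (basisGmp2 (K := K) q m (m / p)))
        = LinearMap.ker (D2 q m) ⊓ LinearMap.ker (D2 q (2 * m)) ⊓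
            LinearMap.ker (((pderiv 0).toLinearMap * (pderiv 1).toLinearMap :
              Module.End K (MvPolynomial (Fin 2) K)) ^ (m / p))
    ∧ Module.finrank K
        ↥(LinearMap.ker (D2 q m) ⊓ LinearMap.ker (D2 q (2 * m)) ⊓
            LinearMap.ker (((pderiv 0).toLinearMap * (pderiv 1).toLinearMap :
              Module.End K (MvPolynomial (Fin 2) K)) ^ (m / p)))
        = 2 * m ^ 2 / p := by
  rw [pow_two, ← mul_assoc, Nat.mul_div_assoc _ hpm]
  exact basis_qHarmonic_Gmp2_general q (m.div_le_self p) fun n _ ↦ one_add_mul_natCast_ne_zero hq n
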